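/- Let α, β > 0 and b < c, and suppose V ∈ L^∞(ℝ) satisfies V(x) ≥ α for a.e. x ∈ (−∞,b) ∪ (c,∞) and V(x) = −β for x ∈ (b,c). If √β·(c−b) ≥ π, then there exists a ∈ [b,c] such that F(a;V) = m(V); in particular the infimum inf_{a∈ℝ} F(a;V) = m(V) is attained at a point of [b,c]. -/

import Mathlib

open MeasureTheory Filter Real Topology

/-- The supremum norm `‖u‖_∞` of a (bounded continuous) function `u : ℝ → ℝ`. -/
noncomputable def supNorm (u : ℝ → ℝ) : ℝ := ⨆ x : ℝ, |u x|

/-- `u` is (the continuous representative of) an element of `H¹(ℝ)`: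
`u` is continuous, `u ∈ L²(ℝ)`, and there is a weak derivative `u' ∈ L²(ℝ)`,
i.e. `u x = u 0 + ∫_0^x u'`. -/
def IsH1 (u : ℝ → ℝ) : Prop :=
  Continuous u ∧ MemLp u 2 (volume : Measure ℝ) ∧
    ∃ u' : ℝ → ℝ, MemLp u' 2 (volume : Measure ℝ) ∧
      ∀ x : ℝ, u x = u 0 + ∫ t in (0:ℝ)..x, u' t

/-- The Dirichlet energy `∫_ℝ |u'(x)|² dx`.  (For `u ∈ H¹(ℝ)` the classical
derivative `deriv u` exists a.e. and coincides a.e. with the weak derivative.) -/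
noncomputable def energy (u : ℝ → ℝ) : ℝ := ∫ x : ℝ, (deriv u x) ^ 2

/-- `I(u;V) = ∫_ℝ (|u'(x)|² + V(x)|u(x)|²) dx` for a potential `V : ℝ → ℝ`. -/
noncomputable def IV (V : ℝ → ℝ) (u : ℝ → ℝ) : ℝ :=
  ∫ x : ℝ, ((deriv u x) ^ 2 + V x * (u x) ^ 2)

/-- Membership in `K_a = { u ∈ H¹(ℝ) ; u(a) = ‖u‖_∞ = 1 }`. -/
def InKa (a : ℝ) (u : ℝ → ℝ) : Prop := IsH1 u ∧ u a = 1 ∧ supNorm u = 1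

/-- `F(a;V) = inf { I(u;V) ; u ∈ K_a }`. -/
noncomputable def FV (V : ℝ → ℝ) (a : ℝ) : ℝ :=
  sInf {r : ℝ | ∃ u : ℝ → ℝ, InKa a u ∧ r = IV V u}

/-- `m(V) = inf { I(u;V)/‖u‖_∞² ; u ∈ H¹(ℝ), u ≢ 0 }`. -/
noncomputable def mV (V : ℝ → ℝ) : ℝ :=
  sInf {r : ℝ | ∃ u : ℝ → ℝ, IsH1 u ∧ u ≠ 0 ∧ r = IV V u / (supNorm u) ^ 2}


lemma ac_of_dist_le {f g h : ℝ → ℝ} {a b : ℝ}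
    (hg : AbsolutelyContinuousOnInterval g a b) (hh : AbsolutelyContinuousOnInterval h a b)
    (hd : ∀ x y, dist (f x) (f y) ≤ dist (g x) (g y) + dist (h x) (h y)) :
    AbsolutelyContinuousOnInterval f a b := by
  apply squeeze_zero (fun t ↦ ?_) (fun t ↦ ?_) (by simpa using Tendsto.add hg hh)
  · exact Finset.sum_nonneg (fun i hi ↦ by positivity)
  · rw [← Finset.sum_add_distrib]
    gcongr
    apply hd

lemma h1_ac {u : ℝ → ℝ} (hu : IsH1 u) (a b : ℝ) : AbsolutelyContinuousOnInterval u a b := by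
  obtain ⟨hc, hu2, u', hu', h⟩ := hu
  have hl : LocallyIntegrable u' volume := hu'.locallyIntegrable (by norm_num)
  have hI : IntervalIntegrable u' volume (-(|a|+|b|)) (|a|+|b|) :=
    (hl.integrableOn_isCompact isCompact_uIcc).intervalIntegrable
  have h0 : (0:ℝ) ∈ Set.uIcc (-(|a|+|b|)) (|a|+|b|) := by
    rw [Set.mem_uIcc]; left; constructor <;> linarith [abs_nonneg a, abs_nonneg b]
  have h1 := hI.absolutelyContinuousOnInterval_intervalIntegral h0
  have h2 : AbsolutelyContinuousOnInterval u (-(|a|+|b|)) (|a|+|b|) := by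
    refine ac_of_dist_le h1 h1 (fun x y => ?_)
    rw [h x, h y]
    simp only [dist_add_left]
    linarith [dist_nonneg (x := ∫ t in (0:ℝ)..x, u' t) (y := ∫ t in (0:ℝ)..y, u' t)]
  refine h2.mono ?_
  rw [Set.uIcc_of_le (a := -(|a|+|b|)) (by linarith [abs_nonneg a, abs_nonneg b])]
  apply Set.uIcc_subset_Icc
  · constructor <;> linarith [abs_nonneg a, abs_nonneg b, le_abs_self a, neg_abs_le a]
  · constructor <;> linarith [abs_nonneg a, abs_nonneg b, le_abs_self b, neg_abs_le b]

lemma ae_diff_of_ac {f : ℝ → ℝ} (hf : ∀ a b, AbsolutelyContinuousOnInterval f a b) :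
    ∀ᵐ x : ℝ, DifferentiableAt ℝ f x := by
  have h : ∀ n : ℕ, ∀ᵐ x : ℝ, x ∈ Set.uIcc (-(n:ℝ)) n → DifferentiableAt ℝ f x :=
    fun n => (hf _ _).ae_differentiableAt
  filter_upwards [ae_all_iff.2 h] with x hx
  obtain ⟨n, hn⟩ := exists_nat_ge |x|
  refine hx n ?_
  rw [Set.mem_uIcc]; left
  exact abs_le.1 hn

lemma h1_deriv {u : ℝ → ℝ} (hu : IsH1 u) : MemLp (deriv u) 2 (volume : Measure ℝ) := by
  obtain ⟨hc, hu2, u', hu', h⟩ := hu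
  have hl : LocallyIntegrable u' volume := hu'.locallyIntegrable (by norm_num)
  refine (memLp_congr_ae ?_).1 hu'
  filter_upwards [_root_.LocallyIntegrable.ae_hasDerivAt_integral hl] with x hx
  have h1 : HasDerivAt u (u' x) x := by
    have := (hx 0).const_add (u 0)
    rwa [← funext h] at this
  exact h1.deriv.symm

lemma h1_bdd {u : ℝ → ℝ} (hu : IsH1 u) : BddAbove (Set.range fun x => |u x|) := by
  have hi : Integrable (fun x => u x ^ 2 + deriv u x ^ 2) volume :=
    hu.2.1.integrable_sq.add (h1_deriv hu).integrable_sq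
  set M := ∫ x, (u x ^ 2 + deriv u x ^ 2) with hM
  have key : ∀ x, u x ^ 2 ≤ u 0 ^ 2 + M := by
    intro x
    have h1 := (h1_ac hu 0 x).integral_deriv_mul_eq_sub (h1_ac hu 0 x)
    have h2 : |∫ t in (0:ℝ)..x, (deriv u t * u t + u t * deriv u t)| ≤ M := by
      rw [← Real.norm_eq_abs]
      refine (intervalIntegral.norm_integral_le_integral_norm_uIoc).trans ?_
      have : ∫ t in Set.uIoc 0 x, ‖deriv u t * u t + u t * deriv u t‖ ≤
          ∫ t in Set.uIoc 0 x, (u t ^ 2 + deriv u t ^ 2) := by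
        refine integral_mono_of_nonneg (ae_of_all _ fun t => norm_nonneg _) hi.integrableOn
          (ae_of_all _ fun t => ?_)
        simp only [Real.norm_eq_abs]
        rw [abs_le]
        constructor <;> nlinarith [sq_nonneg (u t + deriv u t), sq_nonneg (u t - deriv u t)]
      refine this.trans (setIntegral_le_integral hi (ae_of_all _ fun t => ?_))
      simp only [Pi.zero_apply]; positivity
    rw [h1] at h2
    nlinarith [(abs_le.1 h2).2]
  refine ⟨u 0 ^ 2 + M + 1, ?_⟩
  rintro _ ⟨x, rfl⟩
  have := key x
  simp only
  nlinarith [sq_abs (u x), sq_nonneg (|u x| - 1)]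

lemma le_supNorm {u : ℝ → ℝ} (hu : IsH1 u) (x : ℝ) : |u x| ≤ supNorm u :=
  le_ciSup (h1_bdd hu) x

/-- the cosine bump -/
noncomputable def bump (k m : ℝ) (x : ℝ) : ℝ := cos (min |k * (x - m)| (π / 2))

lemma bump_nonneg (k m x : ℝ) : 0 ≤ bump k m x := by
  apply cos_nonneg_of_neg_pi_div_two_le_of_le
  · have := le_min (abs_nonneg (k * (x - m))) pi_div_two_pos.le
    linarith [pi_pos]
  · exact min_le_right _ _

lemma bump_le_one (k m x : ℝ) : bump k m x ≤ 1 := cos_le_one _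

lemma bump_in {k m x : ℝ} (h : |k * (x - m)| ≤ π / 2) : bump k m x = cos (k * (x - m)) := by
  rw [bump, min_eq_left h, cos_abs]

lemma bump_center (k m : ℝ) : bump k m m = 1 := by
  rw [bump_in (by simp [pi_div_two_pos.le])]; simp

lemma bump_out {k m x : ℝ} (h : π / 2 ≤ |k * (x - m)|) : bump k m x = 0 := by
  rw [bump, min_eq_right h, cos_pi_div_two]

lemma bump_cont (k m : ℝ) : Continuous (bump k m) := by
  unfold bump; fun_prop

lemma bump_lip {k m : ℝ} : LipschitzWith (Real.nnabs k) (bump k m) := by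
  refine LipschitzWith.of_dist_le_mul fun x y => ?_
  have h1 : dist (bump k m x) (bump k m y) ≤
      |min |k * (x - m)| (π / 2) - min |k * (y - m)| (π / 2)| := by
    rw [Real.dist_eq]; unfold bump
    have := LipschitzWith.dist_le_mul Real.lipschitzWith_cos
      (min |k * (x - m)| (π / 2)) (min |k * (y - m)| (π / 2))
    simpa [Real.dist_eq] using this
  refine h1.trans ((abs_min_sub_min_le_max _ _ _ _).trans ?_)
  rw [sub_self, abs_zero, max_eq_left (abs_nonneg _)]
  refine (abs_abs_sub_abs_le _ _).trans ?_
  rw [Real.dist_eq, ← mul_sub, abs_mul]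
  simp

/-- the competitor -/
noncomputable def comp (k m : ℝ) (u : ℝ → ℝ) (x : ℝ) : ℝ := max |u x| (bump k m x)

lemma comp_ac {k m : ℝ} {u : ℝ → ℝ} (hu : IsH1 u) (a b : ℝ) :
    AbsolutelyContinuousOnInterval (comp k m u) a b := by
  refine ac_of_dist_le (h1_ac hu a b)
    (bump_lip (k := k) (m := m)).lipschitzOnWith.absolutelyContinuousOnInterval (fun x y => ?_)
  simp only [Real.dist_eq, comp]
  refine (abs_max_sub_max_le_max _ _ _ _).trans (max_le ?_ ?_)
  · linarith [abs_abs_sub_abs_le (u x) (u y), abs_nonneg (bump k m x - bump k m y)]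
  · linarith [abs_nonneg (u x - u y)]

lemma comp_nonneg (k m : ℝ) (u : ℝ → ℝ) (x : ℝ) : 0 ≤ comp k m u x :=
  (abs_nonneg _).trans (le_max_left _ _)

lemma comp_cont {k m : ℝ} {u : ℝ → ℝ} (hu : IsH1 u) : Continuous (comp k m u) := by
  have := hu.1; have := bump_cont k m
  unfold comp; fun_prop

lemma comp_deriv_hi {k m : ℝ} {u : ℝ → ℝ} (hc : Continuous u) {x : ℝ}
    (h : |u x| < bump k m x) :
    |k * (x - m)| < π / 2 ∧ comp k m u x = cos (k * (x - m)) ∧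
      deriv (comp k m u) x = - k * sin (k * (x - m)) := by
  have hx : |k * (x - m)| < π / 2 := by
    by_contra hn
    rw [bump_out (not_lt.1 hn)] at h
    linarith [abs_nonneg (u x)]
  refine ⟨hx, ?_, ?_⟩
  · rw [comp, max_eq_right h.le, bump_in hx.le]
  · have e1 : ∀ᶠ y in 𝓝 x, |u y| < bump k m y :=
      hc.abs.continuousAt.eventually_lt (bump_cont k m).continuousAt h
    have e2 : ∀ᶠ y in 𝓝 x, |k * (y - m)| < π / 2 :=
      ContinuousAt.eventually_lt (by fun_prop) (by fun_prop) hx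
    have e : comp k m u =ᶠ[𝓝 x] fun y => cos (k * (y - m)) := by
      filter_upwards [e1, e2] with y h1 h2
      rw [comp, max_eq_right h1.le, bump_in h2.le]
    rw [e.deriv_eq]
    have : HasDerivAt (fun y => cos (k * (y - m))) (-sin (k * (x - m)) * (k * 1)) x :=
      (((hasDerivAt_id x).sub_const m).const_mul k).cos
    rw [this.deriv]; ring

lemma comp_deriv_lo {k m : ℝ} {u : ℝ → ℝ} {x : ℝ}
    (h : bump k m x ≤ |u x|) (hd : DifferentiableAt ℝ u x)
    (hd' : DifferentiableAt ℝ (comp k m u) x) :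
    comp k m u x ^ 2 = u x ^ 2 ∧
      comp k m u x * deriv (comp k m u) x = u x * deriv u x ∧
      deriv (comp k m u) x ^ 2 ≤ deriv u x ^ 2 := by
  have e : comp k m u x = |u x| := max_eq_left h
  have e2 : comp k m u x ^ 2 = u x ^ 2 := by rw [e, sq_abs]
  have e3 : comp k m u x * deriv (comp k m u) x = u x * deriv u x := by
    have hmin : IsLocalMin (fun y => comp k m u y * comp k m u y - u y * u y) x := by
      refine Filter.Eventually.of_forall fun y => ?_
      have h1 : |u y| ≤ comp k m u y := le_max_left _ _
      have h2 : u y ^ 2 ≤ comp k m u y ^ 2 := by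
        rw [← sq_abs (u y)]; gcongr
      simp only
      nlinarith
    have h0 := hmin.hasDerivAt_eq_zero
      ((hd'.hasDerivAt.mul hd'.hasDerivAt).sub (hd.hasDerivAt.mul hd.hasDerivAt))
    linarith
  refine ⟨e2, e3, ?_⟩
  by_cases hz : u x = 0
  · have hmin : IsLocalMin (comp k m u) x := by
      refine Filter.Eventually.of_forall fun y => ?_
      rw [e, hz, abs_zero]; exact comp_nonneg _ _ _ _
    rw [hmin.deriv_eq_zero, zero_pow two_ne_zero]; exact sq_nonneg _
  · have hp : 0 < u x ^ 2 := by positivity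
    have : u x ^ 2 * deriv (comp k m u) x ^ 2 = u x ^ 2 * deriv u x ^ 2 := by
      calc _ = (comp k m u x * deriv (comp k m u) x) ^ 2 := by rw [mul_pow, e2]
        _ = _ := by rw [e3]; ring
    exact (mul_left_cancel₀ hp.ne' this).le

lemma comp_h1 {k m : ℝ} (hk : 0 < k) {u : ℝ → ℝ} (hu : IsH1 u) : IsH1 (comp k m u) := by
  have hind : ∀ c : ℝ, Integrable (Set.indicator (Set.Icc (m - π / 2 / k) (m + π / 2 / k))
      fun _ => c) (volume : Measure ℝ) := by
    intro c
    rw [integrable_indicator_iff measurableSet_Icc]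
    exact integrableOn_const (by simp)
  have hmem : ∀ x, |k * (x - m)| < π / 2 → x ∈ Set.Icc (m - π / 2 / k) (m + π / 2 / k) := by
    intro x hx
    rw [abs_mul, abs_of_pos hk, mul_comm, ← lt_div_iff₀ hk, abs_lt] at hx
    constructor <;> linarith
  refine ⟨comp_cont hu, ?_, deriv (comp k m u), ?_, ?_⟩
  · rw [memLp_two_iff_integrable_sq (comp_cont hu).aestronglyMeasurable]
    refine (hu.2.1.integrable_sq.add (hind 1)).mono'
      ((comp_cont hu).pow 2).aestronglyMeasurable (ae_of_all _ fun x => ?_)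
    simp only [Pi.add_apply]
    rw [Real.norm_eq_abs, abs_of_nonneg (sq_nonneg _)]
    by_cases h : |u x| < bump k m x
    · obtain ⟨h1, h2, -⟩ := comp_deriv_hi hu.1 h
      rw [Set.indicator_of_mem (hmem x h1), h2]
      nlinarith [cos_sq_le_one (k * (x - m)), sq_nonneg (u x)]
    · rw [comp, max_eq_left (not_lt.1 h), sq_abs]
      have := Set.indicator_nonneg (s := Set.Icc (m - π / 2 / k) (m + π / 2 / k))
        (f := fun _ : ℝ => (1:ℝ)) (fun _ _ => zero_le_one) x
      linarith
  · rw [memLp_two_iff_integrable_sq (aestronglyMeasurable_deriv _ _)]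
    refine ((h1_deriv hu).integrable_sq.add (hind (k ^ 2))).mono'
      ((aestronglyMeasurable_deriv _ _).pow 2) ?_
    filter_upwards [ae_diff_of_ac (h1_ac hu), ae_diff_of_ac (comp_ac (k := k) (m := m) hu)]
      with x hd hd'
    simp only [Pi.add_apply]
    rw [Real.norm_eq_abs, abs_of_nonneg (sq_nonneg _)]
    by_cases h : |u x| < bump k m x
    · obtain ⟨h1, -, h2⟩ := comp_deriv_hi hu.1 h
      rw [Set.indicator_of_mem (hmem x h1), h2]
      nlinarith [sin_sq_le_one (k * (x - m)), sq_nonneg (deriv u x), sq_nonneg k]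
    · have h1 := (comp_deriv_lo (not_lt.1 h) hd hd').2.2
      have := Set.indicator_nonneg (s := Set.Icc (m - π / 2 / k) (m + π / 2 / k))
        (f := fun _ : ℝ => k ^ 2) (fun _ _ => sq_nonneg k) x
      linarith
  · intro x
    rw [(comp_ac hu 0 x).integral_deriv_eq_sub]; ring

lemma comp_Ka {k m : ℝ} (hk : 0 < k) {u : ℝ → ℝ} (hu : IsH1 u) (h1 : ∀ x, |u x| ≤ 1) :
    InKa m (comp k m u) := by
  have hm : comp k m u m = 1 := by rw [comp, bump_center, max_eq_right (h1 m)]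
  refine ⟨comp_h1 hk hu, hm, le_antisymm ?_ ?_⟩
  · refine ciSup_le fun x => ?_
    rw [abs_of_nonneg (comp_nonneg _ _ _ _)]
    exact max_le (h1 x) (bump_le_one _ _ _)
  · have := le_supNorm (comp_h1 (m := m) hk hu) m
    rwa [hm, abs_one] at this

lemma IV_integrable {V u : ℝ → ℝ} (hV : MemLp V ⊤ (volume : Measure ℝ)) (hu : IsH1 u) :
    Integrable (fun x => (deriv u x) ^ 2 + V x * (u x) ^ 2) := by
  refine (h1_deriv hu).integrable_sq.add ?_
  have : MemLp (fun x => u x ^ 2) 1 (volume : Measure ℝ) :=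
    memLp_one_iff_integrable.2 hu.2.1.integrable_sq
  exact MemLp.integrable_mul hV this

/-- key energy comparison -/
lemma IV_comp_le {β b c m : ℝ} {k : ℝ} (hk : 0 < k) (hkβ : k ^ 2 = β)
    (hb : b ≤ m - π / 2 / k) (hc : m + π / 2 / k ≤ c)
    {V : ℝ → ℝ} (hV : MemLp V ⊤ (volume : Measure ℝ))
    (hin : ∀ x ∈ Set.Ioo b c, V x = -β) {u : ℝ → ℝ} (hu : IsH1 u) :
    IV V (comp k m u) ≤ IV V u := by
  set L := π / 2 / k with hL
  have hLpos : 0 < L := by positivity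
  have hkL : k * L = π / 2 := by rw [hL]; field_simp
  have hv := comp_h1 (m := m) hk hu
  set v := comp k m u with hvdef
  set D : ℝ → ℝ := fun x => ((deriv v x) ^ 2 + V x * (v x) ^ 2) -
    ((deriv u x) ^ 2 + V x * (u x) ^ 2) with hD
  have hDi : Integrable D := (IV_integrable hV hv).sub (IV_integrable hV hu)
  have hdiff := ae_diff_of_ac (h1_ac hu)
  have hdiff' := ae_diff_of_ac (h1_ac hv)
  suffices h : ∫ x, D x ≤ 0 by
    rw [hD, integral_sub (IV_integrable hV hv) (IV_integrable hV hu)] at h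
    unfold IV; linarith
  have hsmall : ∀ r, 0 < r → r < L → ∫ x in (m - r)..(m + r), D x ≤ 2 * k * cos (k * r) := by
    intro r hr hrL
    set T : ℝ → ℝ := fun x => - k * tan (k * (x - m)) with hT
    set G : ℝ → ℝ := fun x => T x * (v x * v x - u x * u x) with hG
    have hang : ∀ x ∈ Set.Icc (m - r) (m + r), |k * (x - m)| ≤ k * r := by
      intro x hx
      rw [abs_mul, abs_of_pos hk]
      gcongr
      rw [abs_le]; constructor <;> linarith [hx.1, hx.2]
    have hkr : k * r < π / 2 := by rw [← hkL]; gcongr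
    have hcos : ∀ x ∈ Set.Icc (m - r) (m + r), 0 < cos (k * (x - m)) := by
      intro x hx
      have := abs_le.1 (hang x hx)
      apply cos_pos_of_mem_Ioo
      constructor <;> linarith
    have hTd : ∀ x ∈ Set.Icc (m - r) (m + r), HasDerivAt T (- k ^ 2 - T x ^ 2) x := by
      intro x hx
      have h0 := (hcos x hx).ne'
      have h1 := (Real.hasDerivAt_tan h0).comp x ((((hasDerivAt_id x).sub_const m).const_mul k))
      have h2 := h1.const_mul (-k)
      refine h2.congr_deriv ?_
      simp only [hT]
      rw [tan_eq_sin_div_cos]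
      field_simp
      nlinarith [sin_sq_add_cos_sq (k * (x - m))]
    have hle : m - r ≤ m + r := by linarith
    have hTac : AbsolutelyContinuousOnInterval T (m - r) (m + r) := by
      apply ContDiffOn.absolutelyContinuousOnInterval
      rw [Set.uIcc_of_le hle]
      intro x hx
      apply ContDiffAt.contDiffWithinAt
      have h0 := (hcos x hx).ne'
      have : ContDiffAt ℝ 1 tan (k * (x - m)) := contDiffAt_tan.2 h0
      have h3 : ContDiffAt ℝ 1 (fun y : ℝ => k * (y - m)) x := by fun_prop
      exact contDiffAt_const.mul (ContDiffAt.comp (g := tan) x this h3)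
    have hua := h1_ac hu (m - r) (m + r)
    have hva := h1_ac hv (m - r) (m + r)
    have hGac : AbsolutelyContinuousOnInterval G (m - r) (m + r) :=
      hTac.fun_mul ((hva.fun_mul hva).fun_sub (hua.fun_mul hua))
    have hGb : ∀ x ∈ Set.Icc (m - r) (m + r), |G x| ≤ k * cos (k * (x - m)) := by
      intro x hx
      have h0 := hcos x hx
      have hx2 : |k * (x - m)| ≤ π / 2 := (hang x hx).trans hkr.le
      have hsin := abs_sin_le_one (k * (x - m))
      have hh : |v x * v x - u x * u x| ≤ cos (k * (x - m)) ^ 2 := by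
        rw [hvdef, comp, bump_in hx2]
        rcases le_total |u x| (cos (k * (x - m))) with h | h
        · rw [max_eq_right h, abs_le]
          have : u x ^ 2 ≤ cos (k * (x - m)) ^ 2 := by
            rw [← sq_abs]; gcongr
          constructor <;> nlinarith
        · rw [max_eq_left h, abs_mul_abs_self, sub_self, abs_zero]; positivity
      rw [hG]; simp only [hT]
      rw [abs_mul, abs_mul, abs_neg, abs_of_pos hk, tan_eq_sin_div_cos, abs_div, abs_of_pos h0]
      calc k * (|sin (k * (x - m))| / cos (k * (x - m))) * |v x * v x - u x * u x|
          ≤ k * (1 / cos (k * (x - m))) * cos (k * (x - m)) ^ 2 := by gcongr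
        _ = k * cos (k * (x - m)) := by field_simp
    have hint : ∫ x in (m - r)..(m + r), D x ≤ ∫ x in (m - r)..(m + r), deriv G x := by
      refine intervalIntegral.integral_mono_ae_restrict hle hDi.intervalIntegrable
        hGac.intervalIntegrable_deriv ?_
      refine (ae_restrict_iff' measurableSet_Icc).2 ?_
      filter_upwards [hdiff, hdiff'] with x hd hd' hx
      have hxin : x ∈ Set.Ioo b c := by
        constructor <;> linarith [hx.1, hx.2]
      have hGd : HasDerivAt G ((- k ^ 2 - T x ^ 2) * (v x * v x - u x * u x) +
          T x * ((deriv v x * v x + v x * deriv v x) - (deriv u x * u x + u x * deriv u x))) x :=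
        (hTd x hx).mul ((hd'.hasDerivAt.mul hd'.hasDerivAt).sub (hd.hasDerivAt.mul hd.hasDerivAt))
      rw [hGd.deriv]
      simp only [hD]
      rw [hin x hxin, ← hkβ]
      by_cases h : |u x| < bump k m x
      · obtain ⟨-, h2, h3⟩ := comp_deriv_hi hu.1 h
        have h4 : deriv v x = T x * v x := by
          rw [hvdef, h2, h3]; simp only [hT]
          have := (hcos x hx).ne'
          rw [tan_eq_sin_div_cos]; field_simp
        rw [h4]
        nlinarith [sq_nonneg (deriv u x - T x * u x)]
      · obtain ⟨h1, h2, h3⟩ := comp_deriv_lo (not_lt.1 h) hd hd'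
        rw [← hvdef] at h1 h2 h3
        have e1 : v x * v x - u x * u x = 0 := by nlinarith
        have e2 : (deriv v x * v x + v x * deriv v x) -
          (deriv u x * u x + u x * deriv u x) = 0 := by nlinarith
        rw [e1, e2, h1]; linarith
    refine hint.trans ?_
    rw [hGac.integral_deriv_eq_sub]
    have g1 := hGb (m + r) ⟨by linarith, by linarith⟩
    have g2 := hGb (m - r) ⟨by linarith, by linarith⟩
    rw [show k * (m + r - m) = k * r by ring] at g1
    rw [show k * (m - r - m) = -(k * r) by ring, cos_neg] at g2
    linarith [(abs_le.1 g1).2, (abs_le.1 g2).1]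
  have hJ : ∫ x in (m - L)..(m + L), D x ≤ 0 := by
    have hcont : Continuous fun r => ∫ x in (m - r)..(m + r), D x := by
      have hP := hDi.continuous_primitive 0
      have : (fun r => ∫ x in (m - r)..(m + r), D x) =
          fun r => (∫ x in (0:ℝ)..(m + r), D x) - ∫ x in (0:ℝ)..(m - r), D x := by
        ext r
        rw [intervalIntegral.integral_interval_sub_left] <;> exact hDi.intervalIntegrable
      rw [this]
      exact (hP.comp (by fun_prop)).sub (hP.comp (by fun_prop))
    have hcont2 : Continuous fun r => 2 * k * cos (k * r) := by fun_prop
    have : ∫ x in (m - L)..(m + L), D x ≤ 2 * k * cos (k * L) := by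
      refine le_of_tendsto_of_tendsto (b := 𝓝[<] L)
        (hcont.continuousWithinAt (s := Set.Iio L) (x := L))
        (hcont2.continuousWithinAt (s := Set.Iio L) (x := L)) ?_
      filter_upwards [Ioo_mem_nhdsLT hLpos] with r hr using hsmall r hr.1 hr.2
    rwa [hkL, cos_pi_div_two, mul_zero] at this
  rw [intervalIntegral.integral_of_le (by linarith)] at hJ
  rw [← integral_add_compl (measurableSet_Ioc (a := m - L) (b := m + L)) hDi]
  have hout : ∫ x in (Set.Ioc (m - L) (m + L))ᶜ, D x ≤ 0 := by
    refine setIntegral_nonpos_ae measurableSet_Ioc.compl ?_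
    filter_upwards [hdiff, hdiff'] with x hd hd' hx
    have hx' : π / 2 ≤ |k * (x - m)| := by
      rw [abs_mul, abs_of_pos hk, ← hkL]
      gcongr
      by_contra hn
      rw [not_le, abs_lt] at hn
      exact hx ⟨by linarith, by linarith⟩
    have h : bump k m x ≤ |u x| := by rw [bump_out hx']; exact abs_nonneg _
    obtain ⟨h1, h2, h3⟩ := comp_deriv_lo h hd hd'
    simp only [hD]
    rw [h1]; linarith
  linarith

lemma h1_smul {u : ℝ → ℝ} (hu : IsH1 u) (s : ℝ) : IsH1 (fun x => s * u x) := by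
  obtain ⟨hc, hu2, u', hu', h⟩ := hu
  refine ⟨by fun_prop, hu2.const_mul s, fun x => s * u' x, hu'.const_mul s, fun x => ?_⟩
  rw [intervalIntegral.integral_const_mul]; simp only; rw [h x]; ring

lemma IV_smul (V u : ℝ → ℝ) (s : ℝ) : IV V (fun x => s * u x) = s ^ 2 * IV V u := by
  unfold IV
  rw [← integral_const_mul]
  congr 1; ext x
  rw [deriv_const_mul_field]; ring

lemma h1_zero : IsH1 (fun _ => 0) :=
  ⟨by fun_prop, MemLp.zero, fun _ => 0, MemLp.zero, by simp⟩

lemma IV_lower {α β b c : ℝ} (hα : 0 < α) (hβ : 0 < β) (hbc : b < c)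
    {V : ℝ → ℝ} (hV : MemLp V ⊤ (volume : Measure ℝ))
    (hout : ∀ᵐ x : ℝ, (x < b ∨ c < x) → α ≤ V x)
    (hin : ∀ x ∈ Set.Ioo b c, V x = -β) {u : ℝ → ℝ} (hu : IsH1 u) (h1 : ∀ x, |u x| ≤ 1) :
    -β * (c - b) ≤ IV V u := by
  have e : ∫ x, Set.indicator (Set.Icc b c) (fun _ => -β) x = -β * (c - b) := by
    rw [integral_indicator measurableSet_Icc, setIntegral_const]
    simp [hbc.le, mul_comm]
  rw [← e]
  have hi : Integrable (Set.indicator (Set.Icc b c) (fun _ => -β)) (volume : Measure ℝ) := by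
    rw [integrable_indicator_iff measurableSet_Icc]
    exact integrableOn_const (by simp)
  refine integral_mono_ae hi (IV_integrable hV hu) ?_
  have hb : ∀ᵐ x : ℝ, x ≠ b := by simp [ae_iff]
  have hc : ∀ᵐ x : ℝ, x ≠ c := by simp [ae_iff]
  filter_upwards [hout, hb, hc] with x hx hxb hxc
  have hu2 : u x ^ 2 ≤ 1 := (sq_le_one_iff_abs_le_one _).2 (h1 x)
  by_cases h : x ∈ Set.Icc b c
  · rw [Set.indicator_of_mem h, hin x ⟨lt_of_le_of_ne h.1 hxb.symm, lt_of_le_of_ne h.2 hxc⟩]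
    nlinarith [sq_nonneg (deriv u x)]
  · rw [Set.indicator_of_notMem h]
    have : α ≤ V x := by
      apply hx
      by_contra hn
      push Not at hn
      exact h hn
    have : 0 ≤ V x := by linarith
    positivity

theorem trapped_mode (α β b c : ℝ) (hα : 0 < α) (hβ : 0 < β) (hbc : b < c)
    (V : ℝ → ℝ) (hV : MemLp V ⊤ (volume : Measure ℝ))
    (hout : ∀ᵐ x : ℝ, (x < b ∨ c < x) → α ≤ V x)
    (hin : ∀ x ∈ Set.Ioo b c, V x = -β)
    (hwell : Real.sqrt β * (c - b) ≥ Real.pi) :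
    ∃ a ∈ Set.Icc b c, FV V a = mV V ∧ ∀ a' : ℝ, FV V a ≤ FV V a' := by
  have hk : 0 < √β := Real.sqrt_pos.2 hβ
  have hk2 : √β ^ 2 = β := Real.sq_sqrt hβ.le
  set k := √β with hkdef
  set m := (b + c) / 2 with hm
  have hL : π / 2 / k ≤ (c - b) / 2 := by
    rw [div_le_iff₀ hk]; nlinarith
  have hTb : BddBelow {r : ℝ | ∃ u : ℝ → ℝ, IsH1 u ∧ u ≠ 0 ∧ r = IV V u / (supNorm u) ^ 2} ∧
      ∀ r ∈ {r : ℝ | ∃ u : ℝ → ℝ, IsH1 u ∧ u ≠ 0 ∧ r = IV V u / (supNorm u) ^ 2},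
        ∃ u, IsH1 u ∧ (∀ x, |u x| ≤ 1) ∧ r = IV V u := by
    have h2 : ∀ r ∈ {r : ℝ | ∃ u : ℝ → ℝ, IsH1 u ∧ u ≠ 0 ∧ r = IV V u / (supNorm u) ^ 2},
        ∃ u, IsH1 u ∧ (∀ x, |u x| ≤ 1) ∧ r = IV V u := by
      rintro r ⟨u, hu, hu0, rfl⟩
      obtain ⟨x, hx⟩ := Function.ne_iff.1 hu0
      have hpos : 0 < supNorm u := (abs_pos.2 hx).trans_le (le_supNorm hu x)
      refine ⟨fun x => (supNorm u)⁻¹ * u x, h1_smul hu _, fun y => ?_, ?_⟩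
      · rw [abs_mul, abs_of_pos (inv_pos.2 hpos), inv_mul_le_iff₀ hpos, mul_one]
        exact le_supNorm hu y
      · rw [IV_smul]; field_simp
    refine ⟨⟨-β * (c - b), fun r hr => ?_⟩, h2⟩
    obtain ⟨u, hu, h1, rfl⟩ := h2 r hr
    exact IV_lower hα hβ hbc hV hout hin hu h1
  obtain ⟨hTb, hT⟩ := hTb
  have hsub : ∀ a, {r : ℝ | ∃ u : ℝ → ℝ, InKa a u ∧ r = IV V u} ⊆
      {r : ℝ | ∃ u : ℝ → ℝ, IsH1 u ∧ u ≠ 0 ∧ r = IV V u / (supNorm u) ^ 2} := by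
    rintro a r ⟨u, ⟨hu, ha, hs⟩, rfl⟩
    refine ⟨u, hu, ?_, by rw [hs]; simp⟩
    rintro rfl
    simp at ha
  have hne : ∀ a, {r : ℝ | ∃ u : ℝ → ℝ, InKa a u ∧ r = IV V u}.Nonempty := fun a =>
    ⟨_, comp k a (fun _ => 0), comp_Ka hk h1_zero (by simp), rfl⟩
  have hle : ∀ a, mV V ≤ FV V a := fun a => csInf_le_csInf hTb (hne a) (hsub a)
  have hge : FV V m ≤ mV V := by
    refine le_csInf ((hne m).mono (hsub m)) fun r hr => ?_
    obtain ⟨u, hu, h1, rfl⟩ := hT r hr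
    refine (csInf_le (hTb.mono (hsub m)) ⟨comp k m u, comp_Ka hk hu h1, rfl⟩).trans ?_
    exact IV_comp_le hk hk2 (by linarith) (by linarith) hV hin hu
  exact ⟨m, ⟨by linarith, by linarith⟩, le_antisymm hge (hle m), fun a' => hge.trans (hle a')⟩
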